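/- There exists a polynomial Δ ∈ MvPolynomial D ℂ in the 10 coefficient variables such that: (i) Δ is irreducible; (ii) Δ is homogeneous of some positive degree; (iii) Δ is SL₃-invariant, i.e., for every g ∈ SL₃(ℂ) and every a : D → ℂ, Δ evaluated at the coefficient vector of f_a∘g equals Δ evaluated at a; and (iv) for every a : D → ℂ, Δ(a) ≠ 0 if and only if f_a is a smooth cubic form (i.e., the plane cubic C(f_a) is an elliptic curve). -/

import Mathlib

/-!
At a singular point of a ternary cubic `f` the nine cubics `xⱼ ∂ᵢf` and the Hessian of `f` all
vanish, so these ten cubics lie in a hyperplane of the ten-dimensional space of cubics. If `f` is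
smooth they are linearly independent: Krull's height theorem provides a flex, i.e. a common zero of
`f` and its Hessian, hence a Weierstrass form, on which the independence is checked directly. The
`10 × 10` determinant of their coefficients therefore vanishes exactly on the singular cubics.
These are the images under linear substitutions of the cubics singular at one fixed point, so they
are the image of an affine space under a polynomial map, and a single irreducible factor `Δ` of the
determinant has the same zeros.

By the Nullstellensatz a linear automorphism preserving the zeros of `Δ` multiplies `Δ` by a
constant. For the scaling by `2` this makes `Δ` homogeneous; on `SL₃` the constants form a
character, which is trivial because `SL₃` is perfect.
-/

open MvPolynomial

/-- The 10-element index set of exponent vectors of degree-3 monomials in 3 variables. -/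
def Dset := {d : Fin 3 → ℕ // d 0 + d 1 + d 2 = 3}

instance : Finite Dset := by
  apply Finite.of_injective (fun d : Dset =>
    ((⟨d.1 0, by have := d.2; omega⟩ : Fin 4), (⟨d.1 1, by have := d.2; omega⟩ : Fin 4),
      (⟨d.1 2, by have := d.2; omega⟩ : Fin 4)))
  intro d e h
  simp only [Prod.ext_iff, Fin.ext_iff] at h
  apply Subtype.ext
  funext i
  fin_cases i
  · exact h.1
  · exact h.2.1
  · exact h.2.2

noncomputable instance : Fintype Dset := Fintype.ofFinite _

/-- The cubic form `f_a = Σ_d a_d x₀^{d0} x₁^{d1} x₂^{d2}` with coefficient vector `a`. -/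
noncomputable def cubic (a : Dset → ℂ) : MvPolynomial (Fin 3) ℂ :=
  ∑ d : Dset, C (a d) * (X 0) ^ d.1 0 * (X 1) ^ d.1 1 * (X 2) ^ d.1 2

/-- The coefficient vector of a cubic form. -/
noncomputable def coeffVec (f : MvPolynomial (Fin 3) ℂ) : Dset → ℂ :=
  fun d => MvPolynomial.coeff (Finsupp.equivFunOnFinite.symm d.1) f

/-- The linear substitution `f ∘ g`, i.e. `x_i ↦ Σ_j g_{ij} x_j`, so that
`(f∘g)(v) = f(g·v)`. -/
noncomputable def substSL (g : Matrix.SpecialLinearGroup (Fin 3) ℂ)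
    (f : MvPolynomial (Fin 3) ℂ) : MvPolynomial (Fin 3) ℂ :=
  aeval (fun i : Fin 3 => ∑ j : Fin 3, C (g.1 i j) * X j) f

/-- A cubic form is smooth iff at every nonzero zero of `f` the gradient of `f` does not
vanish; equivalently, the plane cubic `C(f) ⊂ ℙ²(ℂ)` is an elliptic curve. -/
def IsSmoothCubic (f : MvPolynomial (Fin 3) ℂ) : Prop :=
  ∀ v : Fin 3 → ℂ, v ≠ 0 → eval v f = 0 → ∃ i : Fin 3, eval v (pderiv i f) ≠ 0

section LinearSubstitution

variable {R σ : Type*} [CommRing R] [Fintype σ]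

/-- The linear substitution `f ∘ M`, i.e. `X i ↦ ∑ j, M i j * X j`, for a square matrix `M`. -/
noncomputable def linSubst (M : Matrix σ σ R) : MvPolynomial σ R →ₐ[R] MvPolynomial σ R :=
  bind₁ M.toMvPolynomial

theorem eval_linSubst (M : Matrix σ σ R) (f : MvPolynomial σ R) (v : σ → R) :
    eval v (linSubst M f) = eval (M.mulVec v) f := by
  rw [linSubst, ← aeval_eq_eval, aeval_bind₁, ← aeval_eq_eval]
  exact congrArg (aeval · f) (funext (M.toMvPolynomial_eval_eq_apply · v))

theorem linSubst_X (M : Matrix σ σ R) (i : σ) : linSubst M (X i) = M.toMvPolynomial i :=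
  bind₁_X_right _ _

theorem linSubst_toMvPolynomial (M N : Matrix σ σ R) (i : σ) :
    linSubst N (M.toMvPolynomial i) = (M * N).toMvPolynomial i :=
  (M.toMvPolynomial_mul N i).symm

theorem linSubst_one [DecidableEq σ] (f : MvPolynomial σ R) : linSubst 1 f = f := by
  rw [linSubst, Matrix.toMvPolynomial_one, bind₁_X_left, AlgHom.id_apply]

theorem linSubst_linSubst (M N : Matrix σ σ R) (f : MvPolynomial σ R) :
    linSubst N (linSubst M f) = linSubst (M * N) f := by
  have h : (linSubst N).comp (linSubst M) = linSubst (M * N) := algHom_ext fun i ↦ by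
    rw [AlgHom.comp_apply, linSubst_X, linSubst_X, linSubst_toMvPolynomial]
  exact congr($h f)

theorem map_linSubst {S : Type*} [CommRing S] (φ : R →+* S) (M : Matrix σ σ R)
    (f : MvPolynomial σ R) : map φ (linSubst M f) = linSubst (M.map φ) (map φ f) := by
  rw [linSubst, map_bind₁]
  exact congrArg (bind₁ · (map φ f)) (funext fun i ↦ (M.toMvPolynomial_map φ i).symm)

theorem isHomogeneous_linSubst {f : MvPolynomial σ R} {n : ℕ} (hf : f.IsHomogeneous n)
    (M : Matrix σ σ R) : (linSubst M f).IsHomogeneous n := by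
  simpa only [one_mul] using! hf.aeval _ M.toMvPolynomial_isHomogeneous

theorem derivation_linSubst (D : Derivation R (MvPolynomial σ R) (MvPolynomial σ R))
    (M : Matrix σ σ R) (f : MvPolynomial σ R) :
    D (linSubst M f) = ∑ i, linSubst M (pderiv i f) * D (M.toMvPolynomial i) := by
  classical
  induction f using MvPolynomial.induction_on with
  | C a => simp [linSubst]
  | add p q hp hq => simp only [map_add, hp, hq, add_mul, Finset.sum_add_distrib]
  | mul_X p j hp =>
    have hX : ∑ i, linSubst M (pderiv i (X j)) * D (M.toMvPolynomial i) =
        D (M.toMvPolynomial j) := by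
      simp [pderiv_X, Pi.single_apply, apply_ite]
    simp only [map_mul, Derivation.leibniz, smul_eq_mul, map_add, add_mul, mul_assoc,
      Finset.sum_add_distrib, ← Finset.mul_sum, linSubst_X, hp, hX]

theorem pderiv_linSubst (M : Matrix σ σ R) (f : MvPolynomial σ R) (j : σ) :
    pderiv j (linSubst M f) = ∑ i, M i j • linSubst M (pderiv i f) := by
  classical
  have hcoeff (i : σ) : pderiv j (M.toMvPolynomial i) = C (M i j) := by
    simp [Matrix.toMvPolynomial, pderiv_X, ← C_mul_X_eq_monomial, Pi.single_apply]
  simp only [derivation_linSubst, hcoeff, smul_eq_C_mul, mul_comm]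

/-- The derivation `∑ i, (M x)_i ∂/∂x_i` of the polynomial ring, i.e. the infinitesimal linear
substitution with velocity `M`. -/
noncomputable def linDeriv (M : Matrix σ σ R) :
    Derivation R (MvPolynomial σ R) (MvPolynomial σ R) :=
  mkDerivation R M.toMvPolynomial

theorem linDeriv_X (M : Matrix σ σ R) (i : σ) : linDeriv M (X i) = M.toMvPolynomial i :=
  mkDerivation_X ..

theorem linDeriv_toMvPolynomial (M N : Matrix σ σ R) (i : σ) :
    linDeriv M (N.toMvPolynomial i) = (N * M).toMvPolynomial i := by
  simp only [Matrix.toMvPolynomial, ← C_mul_X_eq_monomial, map_sum, Derivation.leibniz, linDeriv_X,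
    smul_eq_mul, derivation_C, mul_zero, add_zero, Matrix.mul_apply, map_mul, Finset.mul_sum,
    mul_assoc]
  exact Finset.sum_comm

theorem linDeriv_eq_sum (M : Matrix σ σ R) (f : MvPolynomial σ R) :
    linDeriv M f = ∑ i, pderiv i f * M.toMvPolynomial i := by
  classical
  simpa [linSubst_one, Matrix.toMvPolynomial_one, linDeriv_X] using
    derivation_linSubst (linDeriv M) 1 f

theorem linSubst_linDeriv {L M N : Matrix σ σ R} (h : L * N = N * M) (f : MvPolynomial σ R) :
    linSubst N (linDeriv L f) = linDeriv M (linSubst N f) := by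
  simp only [linDeriv_eq_sum L, derivation_linSubst, map_sum, map_mul, linSubst_toMvPolynomial,
    linDeriv_toMvPolynomial, h]

end LinearSubstitution

section Hessian

variable {R σ : Type*} [CommRing R]

theorem pderiv_comm (i j : σ) (f : MvPolynomial σ R) :
    pderiv i (pderiv j f) = pderiv j (pderiv i f) := by
  classical
  have h : ⁅(pderiv i : Derivation R (MvPolynomial σ R) _), pderiv j⁆ = 0 :=
    derivation_ext fun k ↦ by
      rw [Derivation.commutator_apply]
      simp [pderiv_X, Pi.single_apply, apply_ite]
  exact sub_eq_zero.mp congr($h f)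

/-- The matrix of second partial derivatives of a polynomial. -/
noncomputable def hessianMatrix (f : MvPolynomial σ R) : Matrix σ σ (MvPolynomial σ R) :=
  Matrix.of fun i j ↦ pderiv i (pderiv j f)

variable [Fintype σ]

theorem hessianMatrix_linSubst (M : Matrix σ σ R) (f : MvPolynomial σ R) :
    hessianMatrix (linSubst M f) =
      (M.map C).transpose * (hessianMatrix f).map (linSubst M) * M.map C := by
  ext1 i j
  simp only [hessianMatrix, Matrix.of_apply, pderiv_linSubst, map_sum, pderiv_C_mul,
    smul_eq_C_mul, Matrix.mul_apply, Matrix.map_apply, Matrix.transpose_apply, Finset.mul_sum,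
    Finset.sum_mul]
  exact Finset.sum_congr rfl fun k _ ↦ Finset.sum_congr rfl fun l _ ↦ by ring

variable [DecidableEq σ]

/-- The Hessian determinant of a polynomial. -/
noncomputable def hessian (f : MvPolynomial σ R) : MvPolynomial σ R :=
  (hessianMatrix f).det

theorem map_hessian {S : Type*} [CommRing S] (φ : R →+* S) (f : MvPolynomial σ R) :
    map φ (hessian f) = hessian (map φ f) := by
  rw [hessian, hessian, RingHom.map_det]
  congr 1
  ext1 i j
  simp [hessianMatrix, pderiv_map]

theorem eval_hessian (f : MvPolynomial σ R) (v : σ → R) :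
    eval v (hessian f) = ((hessianMatrix f).map (eval v)).det :=
  RingHom.map_det _ _

theorem hessian_linSubst (M : Matrix σ σ R) (f : MvPolynomial σ R) :
    hessian (linSubst M f) = M.det ^ 2 • linSubst M (hessian f) := by
  have hC : (M.map C).det = (C M.det : MvPolynomial σ R) := (RingHom.map_det C M).symm
  rw [hessian, hessianMatrix_linSubst, Matrix.det_mul, Matrix.det_mul, Matrix.det_transpose, hC,
    hessian, AlgHom.map_det, smul_eq_C_mul, map_pow]
  simp only [AlgHom.mapMatrix_apply]
  ring

theorem isHomogeneous_hessian {f : MvPolynomial σ R} {n : ℕ} (hf : f.IsHomogeneous n) :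
    (hessian f).IsHomogeneous (Fintype.card σ * (n - 2)) := by
  rw [hessian, Matrix.det_apply]
  refine IsHomogeneous.sum _ _ _ fun τ _ ↦ ?_
  have h := IsHomogeneous.prod Finset.univ (fun i ↦ hessianMatrix f (τ i) i) (fun _ ↦ n - 2)
    fun i _ ↦ hf.pderiv.pderiv
  simp only [Finset.sum_const, Finset.card_univ, smul_eq_mul] at h
  exact zsmul_mem ((mem_homogeneousSubmodule _ _).mpr h) (τ.sign : ℤ)

end Hessian

section Singular

variable {R σ : Type*} [CommRing R]

theorem eval_zero_of_isHomogeneous {f : MvPolynomial σ R} {n : ℕ} (hf : f.IsHomogeneous n)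
    (hn : n ≠ 0) : eval 0 f = 0 := by
  rw [eval_zero, constantCoeff_eq]
  exact hf.coeff_eq_zero (by simpa using hn.symm)

/-- A polynomial is singular if its gradient vanishes at some nonzero point. For a form of positive
degree which is nonzero in the base field, this says that the projective hypersurface it defines
has a singular point. -/
def IsSingular (f : MvPolynomial σ R) : Prop :=
  ∃ v : σ → R, v ≠ 0 ∧ ∀ i, eval v (pderiv i f) = 0

theorem isSingular_smul_iff [IsDomain R] {c : R} (hc : c ≠ 0) {f : MvPolynomial σ R} :
    IsSingular (c • f) ↔ IsSingular f := by
  simp [IsSingular, hc, smul_eval]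

variable [Fintype σ]

theorem sum_mul_eval_pderiv {f : MvPolynomial σ R} {n : ℕ} (hf : f.IsHomogeneous n) (v : σ → R) :
    ∑ i, v i * eval v (pderiv i f) = n * eval v f := by
  simpa using congr(eval v $(hf.sum_X_mul_pderiv))

theorem eval_pderiv_linSubst (M : Matrix σ σ R) (f : MvPolynomial σ R) (v : σ → R) (j : σ) :
    eval v (pderiv j (linSubst M f)) = ∑ i, M i j * eval (M.mulVec v) (pderiv i f) := by
  simp [pderiv_linSubst, eval_linSubst]

theorem hessianMatrix_mulVec {f : MvPolynomial σ R} {n : ℕ} (hf : f.IsHomogeneous n)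
    (v : σ → R) :
    ((hessianMatrix f).map (eval v)).mulVec v =
      ((n - 1 : ℕ) : R) • fun i ↦ eval v (pderiv i f) := by
  ext i
  simpa [Matrix.mulVec, dotProduct, hessianMatrix, pderiv_comm i, mul_comm] using
    sum_mul_eval_pderiv (hf.pderiv (i := i)) v

theorem eval_hessian_eq_zero_of_singular [IsDomain R] [DecidableEq σ]
    {f : MvPolynomial σ R} {n : ℕ} (hf : f.IsHomogeneous n) {v : σ → R} (hv : v ≠ 0)
    (h : ∀ i, eval v (pderiv i f) = 0) : eval v (hessian f) = 0 := by
  rw [eval_hessian]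
  refine Matrix.exists_mulVec_eq_zero_iff.mp ⟨v, hv, ?_⟩
  rw [hessianMatrix_mulVec hf]
  simp [funext_iff, h]

variable [DecidableEq σ]

theorem isSingular_linSubst_of_isUnit {f : MvPolynomial σ R} {M : Matrix σ σ R} (hM : IsUnit M.det)
    (hf : IsSingular f) : IsSingular (linSubst M f) := by
  obtain ⟨v, hv, h⟩ := hf
  have hMv : M.mulVec (M⁻¹.mulVec v) = v := by
    rw [Matrix.mulVec_mulVec, Matrix.mul_nonsing_inv M hM, Matrix.one_mulVec]
  refine ⟨M⁻¹.mulVec v, fun h0 ↦ hv ?_, fun j ↦ ?_⟩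
  · rw [← hMv, h0, Matrix.mulVec_zero]
  · simp [eval_pderiv_linSubst, hMv, h]

theorem isSingular_of_isSingular_linSubst {f : MvPolynomial σ R} {M : Matrix σ σ R}
    (hM : IsUnit M.det) (hf : IsSingular (linSubst M f)) : IsSingular f := by
  have h := isSingular_linSubst_of_isUnit (Matrix.isUnit_nonsing_inv_det M hM) hf
  rwa [linSubst_linSubst, Matrix.mul_nonsing_inv M hM, linSubst_one] at h

omit [DecidableEq σ] in
theorem isSingular_linSubst {K : Type*} [Field K] {f : MvPolynomial σ K} {n : ℕ}
    (hf : f.IsHomogeneous n) (hn : 2 ≤ n) (hs : IsSingular f) (M : Matrix σ σ K) :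
    IsSingular (linSubst M f) := by
  classical
  by_cases hM : M.det = 0
  · obtain ⟨v, hv, hMv⟩ := Matrix.exists_mulVec_eq_zero_iff.mpr hM
    have h0 (i : σ) : eval 0 (pderiv i f) = 0 :=
      eval_zero_of_isHomogeneous hf.pderiv (by lia)
    exact ⟨v, hv, fun j ↦ by
      simp only [eval_pderiv_linSubst, hMv, h0, mul_zero, Finset.sum_const_zero]⟩
  · exact isSingular_linSubst_of_isUnit (isUnit_iff_ne_zero.mpr hM) hs

end Singular

section CommonZeros

variable {K σ : Type*} [Field K]

/-- The translation `X i ↦ X i + C (v i)` of the polynomial ring. -/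
noncomputable def translation (v : σ → K) : MvPolynomial σ K ≃ₐ[K] MvPolynomial σ K :=
  AlgEquiv.ofAlgHom (aeval fun i ↦ X i + C (v i)) (aeval fun i ↦ X i - C (v i))
    (by ext; simp) (by ext; simp)

theorem eval_translation (v w : σ → K) (f : MvPolynomial σ K) :
    eval w (translation v f) = eval (w + v) f := by
  change eval w (bind₁ (fun i ↦ X i + C (v i)) f) = _
  rw [← aeval_eq_eval, aeval_bind₁, ← aeval_eq_eval]
  exact congrArg (aeval · f) (funext fun i ↦ by simp [aeval_eq_eval])

theorem comap_translation_vanishingIdeal_singleton (v : σ → K) :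
    (vanishingIdeal K {(0 : σ → K)}).comap (translation v) = vanishingIdeal K {v} := by
  ext f
  simp [aeval_eq_eval, eval_translation]

variable [Finite σ]

theorem height_vanishingIdeal_singleton [IsAlgClosed K] (v : σ → K) :
    (vanishingIdeal K {v}).height = Nat.card σ := by
  have hheight (w : σ → K) :
      (vanishingIdeal K {w}).height = (vanishingIdeal K {(0 : σ → K)}).height := by
    rw [← comap_translation_vanishingIdeal_singleton]
    exact (translation w).toRingEquiv.height_comap _
  have hdim : ringKrullDim (MvPolynomial σ K) = Nat.card σ := by
    simp [MvPolynomial.ringKrullDim_of_isNoetherianRing, ringKrullDim_eq_zero_of_field]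
  apply le_antisymm
  · have h := Ideal.height_le_ringKrullDim_of_ne_top
      (Ideal.IsPrime.ne_top' (I := vanishingIdeal K {v}))
    rw [hdim] at h
    exact_mod_cast h
  · have h : ringKrullDim (MvPolynomial σ K) ≤ (vanishingIdeal K {v}).height := by
      rw [ringKrullDim_le_iff_isMaximal_height_le]
      intro m hm
      obtain ⟨w, rfl⟩ := isMaximal_iff_eq_vanishingIdeal_singleton.mp hm
      rw [hheight w, hheight v]
    rw [hdim] at h
    exact_mod_cast h

/-- Krull's height theorem is what makes this work: were the origin an isolated common zero, its
ideal, of height `Nat.card σ`, would be a minimal prime of an ideal with fewer generators. -/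
theorem exists_ne_zero_forall_eval_eq_zero [IsAlgClosed K] (s : Finset (MvPolynomial σ K))
    (hs : s.card < Nat.card σ) (h0 : ∀ p ∈ s, eval 0 p = 0) :
    ∃ v : σ → K, v ≠ 0 ∧ ∀ p ∈ s, eval v p = 0 := by
  by_contra! hcontra
  have hmin : vanishingIdeal K {(0 : σ → K)} ∈ (Ideal.span (s : Set _)).minimalPrimes := by
    have hle : Ideal.span (s : Set _) ≤ vanishingIdeal K {(0 : σ → K)} :=
      Ideal.span_le.mpr fun p hp ↦ by simpa [aeval_eq_eval] using h0 p hp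
    refine ⟨⟨inferInstance, hle⟩, fun P ⟨hP, hsP⟩ _ ↦ ?_⟩
    have : zeroLocus K P ⊆ {(0 : σ → K)} := fun v hv ↦ by
      by_contra hv0
      obtain ⟨p, hp, hpv⟩ := hcontra v hv0
      exact hpv (by simpa [aeval_eq_eval] using hv p (hsP (Ideal.subset_span hp)))
    rw [← IsPrime.vanishingIdeal_zeroLocus (K := K) P]
    exact vanishingIdeal_anti_mono this
  have := Ideal.height_le_card_of_mem_minimalPrimes_span_finset hmin
  rw [height_vanishingIdeal_singleton] at this
  exact hs.not_ge (by exact_mod_cast this)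

end CommonZeros

section PolarForm

variable {R σ : Type*} [CommRing R] [Fintype σ] [DecidableEq σ]

/-- The symmetric trilinear form of third derivatives at the origin. For a cubic form `f` it is the
complete polarization of `f`, normalized so that its restriction to the diagonal is `6 f`. -/
noncomputable def polarForm (f : MvPolynomial σ R) :
    (σ → R) →ₗ[R] (σ → R) →ₗ[R] (σ → R) →ₗ[R] R :=
  ∑ i, (LinearMap.proj i).smulRight
    (Matrix.toLinearMap₂' R (Matrix.of fun j k ↦ eval 0 (pderiv i (pderiv j (pderiv k f)))))

theorem polarForm_apply (f : MvPolynomial σ R) (x y z : σ → R) :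
    polarForm f x y z =
      ∑ i, ∑ j, ∑ k, x i * y j * z k * eval 0 (pderiv i (pderiv j (pderiv k f))) := by
  simp [polarForm, Matrix.toLinearMap₂'_apply, Finset.mul_sum, mul_assoc]

theorem polarForm_comm_left (f : MvPolynomial σ R) (x y z : σ → R) :
    polarForm f x y z = polarForm f y x z := by
  rw [polarForm_apply, polarForm_apply, Finset.sum_comm]
  simp only [mul_comm (x _), pderiv_comm]

theorem polarForm_comm_right (f : MvPolynomial σ R) (x y z : σ → R) :
    polarForm f x y z = polarForm f x z y := by
  rw [polarForm_apply, polarForm_apply]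
  refine Finset.sum_congr rfl fun i _ ↦ ?_
  rw [Finset.sum_comm]
  exact Finset.sum_congr rfl fun j _ ↦ Finset.sum_congr rfl fun k _ ↦ by
    rw [pderiv_comm k j, mul_right_comm (x i)]

theorem polarForm_eq_dotProduct {f : MvPolynomial σ R} (hf : f.IsHomogeneous 3) (x y z : σ → R) :
    polarForm f x y z = y ⬝ᵥ ((hessianMatrix f).map (eval x)).mulVec z := by
  have hlin (j k : σ) : ∑ i, x i * eval 0 (pderiv i (pderiv j (pderiv k f))) =
      eval x (pderiv j (pderiv k f)) := by
    have h1 : (pderiv j (pderiv k f)).IsHomogeneous 1 := hf.pderiv.pderiv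
    have hconst (i : σ) : eval x (pderiv i (pderiv j (pderiv k f))) =
        eval 0 (pderiv i (pderiv j (pderiv k f))) := by
      have h0 := (h1.pderiv (i := i)).totalDegree_le
      rw [totalDegree_eq_zero_iff_eq_C.mp (Nat.le_zero.mp h0), eval_C, eval_C]
    simpa only [hconst, Nat.cast_one, one_mul] using sum_mul_eval_pderiv h1 x
  rw [polarForm_apply, Finset.sum_comm]
  simp only [dotProduct, Matrix.mulVec, Matrix.map_apply, hessianMatrix, Matrix.of_apply, ← hlin,
    Finset.mul_sum, Finset.sum_mul]
  refine Finset.sum_congr rfl fun j _ ↦ ?_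
  rw [Finset.sum_comm]
  exact Finset.sum_congr rfl fun k _ ↦ Finset.sum_congr rfl fun i _ ↦ by ring

theorem polarForm_self {f : MvPolynomial σ R} (hf : f.IsHomogeneous 3) (x y : σ → R) :
    polarForm f x x y = 2 * ∑ i, y i * eval x (pderiv i f) := by
  rw [polarForm_comm_right, polarForm_eq_dotProduct hf, hessianMatrix_mulVec hf, dotProduct_smul]
  simp [dotProduct]

theorem polarForm_self_self {f : MvPolynomial σ R} (hf : f.IsHomogeneous 3) (x : σ → R) :
    polarForm f x x x = 6 * eval x f := by
  rw [polarForm_self hf, sum_mul_eval_pderiv hf]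
  push_cast
  ring

theorem polarForm_self_ne_zero {K : Type*} [Field K] [CharZero K] {f : MvPolynomial σ K}
    (hf : f.IsHomogeneous 3) (hs : ¬ IsSingular f) {v : σ → K} (hv : v ≠ 0) :
    polarForm f v v ≠ 0 := fun h ↦
  hs ⟨v, hv, fun i ↦ by
    simpa [Pi.single_apply] using (polarForm_self hf v (Pi.single i 1)).symm.trans congr($h _)⟩

end PolarForm

section InflectionFrame

variable {K V : Type*} [Field K] [AddCommGroup V] [Module K V] {B : V →ₗ[K] V →ₗ[K] V →ₗ[K] K}

theorem linearIndependent_of_flex (hr : ∀ x y z, B x y z = B x z y) {u v w : V} (hu : u ≠ 0)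
    (hvu : B v u = 0) (hvvv : B v v v = 0) (hvvw : B v v w ≠ 0) :
    LinearIndependent K ![u, w, v] := by
  have hvvu : B v v u = 0 := by rw [hr, hvu, LinearMap.zero_apply]
  rw [Fintype.linearIndependent_iff]
  intro c hc
  simp only [Fin.sum_univ_three, Matrix.cons_val] at hc
  have h1 : c 1 = 0 := by simpa [hvvu, hvvv, hvvw] using congr(B v v $hc)
  have h2 : c 2 = 0 := by simpa [h1, hvu, hvvw] using congr(B v $hc w)
  have h0 : c 0 = 0 := by simpa [h1, h2, hu] using hc
  exact Fin.forall_fin_succ.mpr ⟨h0, by simp [Fin.forall_fin_two, h1, h2]⟩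

theorem exists_adjusted_of_flex [CharZero K] (hl : ∀ x y z, B x y z = B y x z)
    (hr : ∀ x y z, B x y z = B x z y) {u v w : V} (hvu : B v u = 0) (huuu : B u u u = 6)
    (hvvv : B v v v = 0) (hvvw : B v v w = 2) :
    ∃ w', B u u w' = 0 ∧ B v w' w' = 0 ∧ B v v w' = 2 := by
  have hvxu (x : V) : B v x u = 0 := by rw [hr, hvu, LinearMap.zero_apply]
  have huuv : B u u v = 0 := by rw [hr, hl, hvxu]
  have hvwv : B v w v = 2 := by rw [hr, hvvw]
  refine ⟨w - (B u u w / 6) • u - (B v w w / 4) • v, ?_, ?_, ?_⟩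
  · simp [huuu, huuv]
  · simp [hvu, hvxu, hvvv, hvvw, hvwv]
    ring
  · simp [hvxu, hvvv, hvvw]

variable [IsAlgClosed K]

theorem kernel_not_isotropic_of_flex (hV : Module.finrank K V = 3)
    (hl : ∀ x y z, B x y z = B y x z) (hr : ∀ x y z, B x y z = B x z y)
    (hB : ∀ x ≠ 0, B x x ≠ 0) {u v w : V} (hu : u ≠ 0) (hvu : B v u = 0) (hvvv : B v v v = 0)
    (hvvw : B v v w ≠ 0) : B u u u ≠ 0 := by
  intro huuu
  have hli := linearIndependent_of_flex hr hu hvu hvvv hvvw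
  obtain ⟨t, ht⟩ := IsAlgClosed.exists_pow_nat_eq (-(B u u w) / B v v w) two_pos
  have hx : u + t • v ≠ 0 := fun h ↦ one_ne_zero <|
    Fintype.linearIndependent_iff.mp hli ![1, 0, t] (by simpa [Fin.sum_univ_three] using h) 0
  refine hB _ hx ((basisOfLinearIndependentOfCardEqFinrank hli (by simp [hV])).ext fun i ↦ ?_)
  have hvvu : B v v u = 0 := by rw [hr, hvu, LinearMap.zero_apply]
  have huvx (x : V) : B u v x = 0 := by rw [hl, hvu, LinearMap.zero_apply]
  have huuv : B u u v = 0 := by rw [hr, huvx]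
  have hw : B u u w + t * (t * B v v w) = 0 := by
    rw [← mul_assoc, ← sq, ht, div_mul_cancel₀ _ hvvw, add_neg_cancel]
  fin_cases i <;> simp [huuu, hvu, hvvu, hvvv, huvx, huuv, hw]

theorem exists_weierstrass_basis [CharZero K] (hV : Module.finrank K V = 3)
    (hl : ∀ x y z, B x y z = B y x z) (hr : ∀ x y z, B x y z = B x z y)
    (hB : ∀ x ≠ 0, B x x ≠ 0) {u v : V} (hu : u ≠ 0) (hv : v ≠ 0) (hvu : B v u = 0)
    (hvvv : B v v v = 0) :
    ∃ b : Module.Basis (Fin 3) K V, B (b 0) (b 0) (b 0) = 6 ∧ B (b 0) (b 0) (b 1) = 0 ∧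
      B (b 2) (b 0) = 0 ∧ B (b 2) (b 1) (b 1) = 0 ∧ B (b 2) (b 2) (b 1) = 2 ∧
      B (b 2) (b 2) (b 2) = 0 := by
  obtain ⟨w, hvvw⟩ : ∃ w, B v v w = 2 :=
    LinearMap.surjective (hB v hv) 2
  obtain ⟨u', hvu', huuu'⟩ : ∃ u', B v u' = 0 ∧ B u' u' u' = 6 := by
    have huuu := kernel_not_isotropic_of_flex hV hl hr hB hu hvu hvvv (hvvw.trans_ne two_ne_zero)
    obtain ⟨c, hc⟩ := IsAlgClosed.exists_pow_nat_eq (6 / B u u u) three_pos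
    refine ⟨c • u, by rw [map_smul, hvu, smul_zero], ?_⟩
    rw [← div_mul_cancel₀ 6 huuu, ← hc]
    simp only [map_smul, LinearMap.smul_apply, smul_eq_mul]
    ring
  have hu' : u' ≠ 0 := by
    rintro rfl
    simp at huuu'
  obtain ⟨w', huuw, hvww, hvvw'⟩ := exists_adjusted_of_flex hl hr hvu' huuu' hvvv hvvw
  have hli := linearIndependent_of_flex hr hu' hvu' hvvv (hvvw'.trans_ne two_ne_zero)
  exact ⟨basisOfLinearIndependentOfCardEqFinrank hli (by simp [hV]),
    by simpa using ⟨huuu', huuw, hvu', hvww, hvvw', hvvv⟩⟩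

end InflectionFrame

section WeierstrassForm

/-- The ternary cubic `x³ + a x z² + b z³ + y² z` in the variables `(x, z, y) = (X 0, X 1, X 2)`, a
plane Weierstrass equation with its flex `(0, 0, 1)` at infinity. -/
noncomputable def weierstrassCubic {R : Type*} [CommRing R] (a b : R) : MvPolynomial (Fin 3) R :=
  X 0 ^ 3 + C a * X 0 * X 1 ^ 2 + C b * X 1 ^ 3 + X 1 * X 2 ^ 2

variable {K : Type*} [Field K] [CharZero K]

theorem linSubst_basis_eq_weierstrassCubic {f : MvPolynomial (Fin 3) K} (hf : f.IsHomogeneous 3)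
    (b : Module.Basis (Fin 3) K (Fin 3 → K)) (h000 : polarForm f (b 0) (b 0) (b 0) = 6)
    (h001 : polarForm f (b 0) (b 0) (b 1) = 0) (h20 : polarForm f (b 2) (b 0) = 0)
    (h211 : polarForm f (b 2) (b 1) (b 1) = 0) (h221 : polarForm f (b 2) (b 2) (b 1) = 2)
    (h222 : polarForm f (b 2) (b 2) (b 2) = 0) :
    linSubst (Matrix.of b).transpose f = weierstrassCubic (polarForm f (b 0) (b 1) (b 1) / 2)
      (polarForm f (b 1) (b 1) (b 1) / 6) := by
  refine funext fun x ↦ ?_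
  have hx : (Matrix.of b).transpose.mulVec x = x 0 • b 0 + x 1 • b 1 + x 2 • b 2 := by
    rw [Matrix.mulVec_transpose, Matrix.vecMul_eq_sum, Fin.sum_univ_three]
    rfl
  have hl := polarForm_comm_left f
  have hr := polarForm_comm_right f
  have h02 (y : Fin 3 → K) : polarForm f (b 0) (b 2) y = 0 := by rw [hl, h20, LinearMap.zero_apply]
  have h0y2 (y : Fin 3 → K) : polarForm f (b 0) y (b 2) = 0 := by rw [hr, h02]
  have h2y0 (y : Fin 3 → K) : polarForm f (b 2) y (b 0) = 0 := by
    rw [hr, h20, LinearMap.zero_apply]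
  have h1y0 (y : Fin 3 → K) : polarForm f (b 1) y (b 0) = polarForm f (b 0) (b 1) y := by
    rw [hr, hl]
  have h6 : (6 : K) ≠ 0 := by norm_num
  rw [eval_linSubst, hx, ← mul_right_inj' h6, ← polarForm_self_self hf, weierstrassCubic]
  simp only [map_add, map_smul, LinearMap.add_apply, LinearMap.smul_apply, smul_eq_mul,
    LinearMap.zero_apply, h000, h001, h20, h211, h221, h222, h02, h0y2, h2y0, h1y0,
    hr (b 0) (b 1) (b 0), hl (b 1) (b 0), hr (b 1) (b 1) (b 2), hl (b 1) (b 2),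
    hr (b 2) (b 1) (b 2), map_mul, map_pow, eval_X, eval_C]
  ring

/-- The intersection points of the curve with its Hessian are the flexes, and the kernel of the
Hessian matrix at a flex spans, together with the flex, the inflectional tangent. -/
theorem exists_linSubst_eq_weierstrassCubic [IsAlgClosed K] {f : MvPolynomial (Fin 3) K}
    (hf : f.IsHomogeneous 3) (hs : ¬ IsSingular f) :
    ∃ g : Matrix (Fin 3) (Fin 3) K, IsUnit g.det ∧
      ∃ a b, linSubst g f = weierstrassCubic a b := by
  classical
  obtain ⟨v, hv, hfv⟩ := exists_ne_zero_forall_eval_eq_zero {f, hessian f}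
    (by simpa using Finset.card_le_two.trans_lt (by norm_num))
    (by simp only [Finset.forall_mem_insert, Finset.mem_singleton, forall_eq,
      eval_zero_of_isHomogeneous hf three_ne_zero,
      eval_zero_of_isHomogeneous (isHomogeneous_hessian hf) (by simp), and_self])
  simp only [Finset.forall_mem_insert, Finset.mem_singleton, forall_eq] at hfv
  obtain ⟨u, hu, hHu⟩ := Matrix.exists_mulVec_eq_zero_iff.mpr ((eval_hessian f v).symm.trans hfv.2)
  have hvu : polarForm f v u = 0 := LinearMap.ext fun z ↦ by
    rw [polarForm_comm_right, polarForm_eq_dotProduct hf, hHu, dotProduct_zero,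
      LinearMap.zero_apply]
  have hvvv : polarForm f v v v = 0 := by rw [polarForm_self_self hf, hfv.1, mul_zero]
  obtain ⟨b, h000, h001, h20, h211, h221, h222⟩ := exists_weierstrass_basis (by simp)
    (polarForm_comm_left f) (polarForm_comm_right f)
    (fun x ↦ polarForm_self_ne_zero hf hs) hu hv hvu hvvv
  refine ⟨_, ?_, _, _, linSubst_basis_eq_weierstrassCubic hf b h000 h001 h20 h211 h221 h222⟩
  rw [Matrix.det_transpose, ← Pi.basisFun_det_apply]
  exact (Pi.basisFun K (Fin 3)).isUnit_det b

end WeierstrassForm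

section JacobianRelations

variable {R : Type*} [CommRing R]

theorem pderiv_zero_weierstrassCubic (a b : R) :
    pderiv 0 (weierstrassCubic a b) = 3 * X 0 ^ 2 + C a * X 1 ^ 2 := by
  simp only [weierstrassCubic, map_add, Derivation.leibniz, Derivation.leibniz_pow, derivation_C,
    pderiv_X, Pi.single_apply, Fin.reduceEq, if_true, if_false]
  ring

theorem pderiv_one_weierstrassCubic (a b : R) :
    pderiv 1 (weierstrassCubic a b) = 2 * C a * X 0 * X 1 + 3 * C b * X 1 ^ 2 + X 2 ^ 2 := by
  simp only [weierstrassCubic, map_add, Derivation.leibniz, Derivation.leibniz_pow, derivation_C,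
    pderiv_X, Pi.single_apply, Fin.reduceEq, if_true, if_false]
  ring

theorem pderiv_two_weierstrassCubic (a b : R) :
    pderiv 2 (weierstrassCubic a b) = 2 * X 1 * X 2 := by
  simp only [weierstrassCubic, map_add, Derivation.leibniz, Derivation.leibniz_pow, derivation_C,
    pderiv_X, Pi.single_apply, Fin.reduceEq, if_true, if_false]
  ring

theorem hessian_weierstrassCubic (a b : R) :
    hessian (weierstrassCubic a b) = 24 * C a * X 0 ^ 2 * X 1 + 72 * C b * X 0 * X 1 ^ 2 -
      24 * X 0 * X 2 ^ 2 - 8 * C a ^ 2 * X 1 ^ 3 := by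
  have hnum (i : Fin 3) (n : ℕ) [n.AtLeastTwo] :
      pderiv i (OfNat.ofNat n : MvPolynomial (Fin 3) R) = 0 := (pderiv i).map_natCast n
  simp only [hessian, Matrix.det_fin_three, hessianMatrix, Matrix.of_apply,
    pderiv_zero_weierstrassCubic, pderiv_one_weierstrassCubic, pderiv_two_weierstrassCubic, map_add,
    Derivation.leibniz, Derivation.leibniz_pow, derivation_C, hnum, pderiv_X, Pi.single_apply,
    Fin.reduceEq, if_true, if_false]
  ring

variable {K : Type*} [Field K] [CharZero K]

theorem eq_zero_of_ternary_cubic_eq_zero {k₀ k₁ k₂ k₃ k₄ k₅ k₆ k₇ k₈ k₉ : K}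
    (h : ∀ x y z : K, k₀ * x ^ 3 + k₁ * x ^ 2 * y + k₂ * x ^ 2 * z + k₃ * x * y ^ 2 +
      k₄ * x * y * z + k₅ * x * z ^ 2 + k₆ * y ^ 3 + k₇ * y ^ 2 * z + k₈ * y * z ^ 2 +
      k₉ * z ^ 3 = 0) :
    k₀ = 0 ∧ k₁ = 0 ∧ k₂ = 0 ∧ k₃ = 0 ∧ k₄ = 0 ∧ k₅ = 0 ∧ k₆ = 0 ∧ k₇ = 0 ∧ k₈ = 0 ∧ k₉ = 0 := by
  have h₀ : k₀ = 0 := by linear_combination h 1 0 0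
  have h₆ : k₆ = 0 := by linear_combination h 0 1 0
  have h₉ : k₉ = 0 := by linear_combination h 0 0 1
  have h₁ : k₁ = 0 := by linear_combination (h 1 1 0 - h 1 (-1) 0) / 2 - h₆
  have h₃ : k₃ = 0 := by linear_combination (h 1 1 0 + h 1 (-1) 0) / 2 - h₀
  have h₂ : k₂ = 0 := by linear_combination (h 1 0 1 - h 1 0 (-1)) / 2 - h₉
  have h₅ : k₅ = 0 := by linear_combination (h 1 0 1 + h 1 0 (-1)) / 2 - h₀
  have h₇ : k₇ = 0 := by linear_combination (h 0 1 1 - h 0 1 (-1)) / 2 - h₉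
  have h₈ : k₈ = 0 := by linear_combination (h 0 1 1 + h 0 1 (-1)) / 2 - h₆
  have h₄ : k₄ = 0 := by
    linear_combination h 1 1 1 - h₀ - h₁ - h₂ - h₃ - h₅ - h₆ - h₇ - h₈ - h₉
  exact ⟨h₀, h₁, h₂, h₃, h₄, h₅, h₆, h₇, h₈, h₉⟩

theorem isSingular_weierstrassCubic {a b : K} (h : 4 * a ^ 3 + 27 * b ^ 2 = 0) :
    IsSingular (weierstrassCubic a b) := by
  obtain ⟨r, hr₁, hr₂⟩ : ∃ r, 3 * r ^ 2 + a = 0 ∧ 2 * a * r + 3 * b = 0 := by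
    by_cases ha : a = 0
    · obtain rfl : b = 0 := by simpa [ha] using h
      exact ⟨0, by simp [ha], by simp⟩
    · refine ⟨-(3 * b) / (2 * a), ?_, ?_⟩ <;> field_simp
      · linear_combination h
      · ring
  refine ⟨![r, 1, 0], fun h0 ↦ one_ne_zero congr($h0 1), ?_⟩
  simp [Fin.forall_fin_succ, pderiv_zero_weierstrassCubic, pderiv_one_weierstrassCubic,
    pderiv_two_weierstrassCubic, hr₁, hr₂]

theorem eq_zero_of_linDeriv_add_smul_hessian_weierstrassCubic {a b : K}
    (hab : 4 * a ^ 3 + 27 * b ^ 2 ≠ 0) {L : Matrix (Fin 3) (Fin 3) K} {β : K}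
    (h : linDeriv L (weierstrassCubic a b) + β • hessian (weierstrassCubic a b) = 0) :
    L = 0 ∧ β = 0 := by
  obtain ⟨h000, h001, h002, h011, h012, h022, h111, h112, h122, h222⟩ :
      3 * L 0 0 = 0 ∧ 3 * L 0 1 + 2 * a * L 1 0 + 24 * a * β = 0 ∧ 3 * L 0 2 = 0 ∧
      a * L 0 0 + 2 * a * L 1 1 + 3 * b * L 1 0 + 72 * b * β = 0 ∧
      2 * a * L 1 2 + 2 * L 2 0 = 0 ∧ L 1 0 - 24 * β = 0 ∧
      a * L 0 1 + 3 * b * L 1 1 - 8 * a ^ 2 * β = 0 ∧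
      a * L 0 2 + 3 * b * L 1 2 + 2 * L 2 1 = 0 ∧ L 1 1 + 2 * L 2 2 = 0 ∧ L 1 2 = 0 := by
    refine eq_zero_of_ternary_cubic_eq_zero fun x y z ↦ ?_
    have hxyz := congr(eval ![x, y, z] $h)
    simp only [linDeriv_eq_sum, Fin.sum_univ_three, pderiv_zero_weierstrassCubic,
      pderiv_one_weierstrassCubic, pderiv_two_weierstrassCubic, hessian_weierstrassCubic,
      Matrix.toMvPolynomial_eval_eq_apply, Matrix.mulVec, dotProduct,
      smul_eval, map_add, map_sub, map_mul, map_pow, eval_X, eval_C, eval_ofNat, map_zero,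
      Matrix.cons_val] at hxyz
    linear_combination hxyz
  have hxzz : 2 * a * L 1 1 + 144 * b * β = 0 := by
    linear_combination h011 - a / 3 * h000 - 3 * b * h022
  have hzzz : 3 * b * L 1 1 - 32 * a ^ 2 * β = 0 := by
    linear_combination h111 - a / 3 * (h001 - 2 * a * h022)
  obtain rfl : β = 0 := (mul_eq_zero.mp
    (by linear_combination (3 * b * hxzz - 2 * a * hzzz) / 16)).resolve_left hab
  have h11 : L 1 1 = 0 := (mul_eq_zero.mp
    (by linear_combination 2 * a ^ 2 * hxzz + 9 * b * hzzz)).resolve_left hab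
  have h10 : L 1 0 = 0 := by linear_combination h022
  refine ⟨Matrix.ext fun i j ↦ ?_, rfl⟩
  fin_cases i <;> fin_cases j <;> simp_all

theorem eq_zero_of_linDeriv_add_smul_hessian [IsAlgClosed K] {f : MvPolynomial (Fin 3) K}
    (hf : f.IsHomogeneous 3) (hs : ¬ IsSingular f) {L : Matrix (Fin 3) (Fin 3) K} {β : K}
    (h : linDeriv L f + β • hessian f = 0) : L = 0 ∧ β = 0 := by
  obtain ⟨g, hg, a, b, hgf⟩ := exists_linSubst_eq_weierstrassCubic hf hs
  have hab : 4 * a ^ 3 + 27 * b ^ 2 ≠ 0 := fun hab ↦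
    hs (isSingular_of_isSingular_linSubst hg (hgf ▸ isSingular_weierstrassCubic hab))
  have hdet : g.det ^ 2 ≠ 0 := pow_ne_zero 2 hg.ne_zero
  have hconj : L * g = g * (g⁻¹ * L * g) := by
    rw [Matrix.mul_assoc, Matrix.mul_nonsing_inv_cancel_left _ _ hg]
  have hrel : linDeriv (g⁻¹ * L * g) (weierstrassCubic a b) +
      (β / g.det ^ 2) • hessian (weierstrassCubic a b) = 0 := by
    rw [← hgf, ← linSubst_linDeriv hconj, hessian_linSubst, smul_smul, div_mul_cancel₀ _ hdet,
      ← map_smul, ← map_add, h, map_zero]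
  obtain ⟨hL, hβ⟩ := eq_zero_of_linDeriv_add_smul_hessian_weierstrassCubic hab hrel
  rw [hL, Matrix.mul_zero] at hconj
  refine ⟨?_, (div_eq_zero_iff.mp hβ).resolve_right hdet⟩
  rw [← Matrix.mul_nonsing_inv_cancel_right g L hg, hconj, Matrix.zero_mul]

end JacobianRelations

section TernaryCubics

variable {R : Type*} [CommRing R]

/-- The exponent vector of a degree-3 monomial, as an index of coefficients of polynomials. -/
noncomputable def Dset.exponent (d : Dset) : Fin 3 →₀ ℕ := Finsupp.equivFunOnFinite.symm d.1

theorem Dset.exponent_injective : Function.Injective Dset.exponent :=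
  Finsupp.equivFunOnFinite.symm.injective.comp Subtype.val_injective

theorem Dset.degree_exponent (d : Dset) : d.exponent.degree = 3 := by
  rw [Finsupp.degree_eq_sum, Fin.sum_univ_three]
  exact d.2

theorem Dset.exists_exponent_eq {m : Fin 3 →₀ ℕ} (hm : m.degree = 3) :
    ∃ d : Dset, d.exponent = m := by
  rw [Finsupp.degree_eq_sum, Fin.sum_univ_three] at hm
  exact ⟨⟨m, hm⟩, Finsupp.equivFunOnFinite.symm_apply_apply m⟩

theorem Dset.card_eq_ten : Nat.card Dset = 10 :=
  Nat.subtype_card (Finset.Nat.antidiagonalTuple 3 3) fun d ↦ by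
    rw [Finset.Nat.mem_antidiagonalTuple, Fin.sum_univ_three]

/-- The ternary cubic form with a given coefficient vector, over any commutative ring. -/
noncomputable def cubicForm : (Dset → R) →ₗ[R] MvPolynomial (Fin 3) R :=
  ∑ d : Dset, monomial d.exponent ∘ₗ LinearMap.proj d

/-- The coefficients of the degree-3 monomials of a ternary polynomial. -/
noncomputable def cubicCoeffs : MvPolynomial (Fin 3) R →ₗ[R] (Dset → R) :=
  LinearMap.pi fun d ↦ lcoeff R d.exponent

theorem cubicForm_apply (a : Dset → R) : cubicForm a = ∑ d, monomial d.exponent (a d) := by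
  simp [cubicForm]

theorem cubicCoeffs_apply (f : MvPolynomial (Fin 3) R) (d : Dset) :
    cubicCoeffs f d = coeff d.exponent f :=
  rfl

theorem isHomogeneous_cubicForm (a : Dset → R) : (cubicForm a).IsHomogeneous 3 := by
  rw [cubicForm_apply]
  exact IsHomogeneous.sum _ _ _ fun d _ ↦ isHomogeneous_monomial _ d.degree_exponent

theorem cubicCoeffs_cubicForm (a : Dset → R) : cubicCoeffs (cubicForm a) = a := by
  classical
  ext d
  simp [cubicCoeffs_apply, cubicForm_apply, coeff_sum, coeff_monomial,
    Dset.exponent_injective.eq_iff]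

theorem cubicForm_cubicCoeffs {f : MvPolynomial (Fin 3) R} (hf : f.IsHomogeneous 3) :
    cubicForm (cubicCoeffs f) = f := by
  ext m
  by_cases hm : m.degree = 3
  · obtain ⟨d, rfl⟩ := Dset.exists_exponent_eq hm
    exact congrFun (cubicCoeffs_cubicForm (cubicCoeffs f)) d
  · rw [hf.coeff_eq_zero hm, (isHomogeneous_cubicForm _).coeff_eq_zero hm]

theorem map_cubicForm {S : Type*} [CommRing S] (φ : R →+* S) (a : Dset → R) :
    map φ (cubicForm a) = cubicForm (φ ∘ a) := by
  simp [cubicForm_apply]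

theorem cubicCoeffs_map {S : Type*} [CommRing S] (φ : R →+* S) (f : MvPolynomial (Fin 3) R) :
    cubicCoeffs (map φ f) = φ ∘ cubicCoeffs f :=
  funext fun _ ↦ coeff_map φ f _

theorem eval_cubicForm (a : Dset → R) (v : Fin 3 → R) :
    eval v (cubicForm a) = ∑ d, a d * ∏ i, v i ^ d.1 i := by
  simp [cubicForm_apply, eval_monomial, Finsupp.prod_fintype, Dset.exponent]

/-- The action of linear substitutions on the coefficient vectors of ternary cubic forms. -/
noncomputable def cubicSubst (M : Matrix (Fin 3) (Fin 3) R) : (Dset → R) →ₗ[R] (Dset → R) :=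
  cubicCoeffs ∘ₗ (linSubst M).toLinearMap ∘ₗ cubicForm

theorem cubicForm_cubicSubst (M : Matrix (Fin 3) (Fin 3) R) (a : Dset → R) :
    cubicForm (cubicSubst M a) = linSubst M (cubicForm a) :=
  cubicForm_cubicCoeffs (isHomogeneous_linSubst (isHomogeneous_cubicForm a) M)

theorem cubicSubst_one : cubicSubst (1 : Matrix (Fin 3) (Fin 3) R) = LinearMap.id :=
  LinearMap.ext fun a ↦ (congrArg cubicCoeffs (linSubst_one _)).trans (cubicCoeffs_cubicForm a)

theorem cubicSubst_mul (M N : Matrix (Fin 3) (Fin 3) R) :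
    cubicSubst (M * N) = cubicSubst N ∘ₗ cubicSubst M := by
  ext1 a
  refine (congrArg cubicCoeffs (linSubst_linSubst M N (cubicForm a))).symm.trans ?_
  rw [← cubicForm_cubicSubst]
  rfl

theorem map_comp_cubicSubst {S : Type*} [CommRing S] (φ : R →+* S)
    (M : Matrix (Fin 3) (Fin 3) R) (a : Dset → R) :
    φ ∘ cubicSubst M a = cubicSubst (M.map φ) (φ ∘ a) := by
  simp only [cubicSubst, LinearMap.comp_apply, AlgHom.toLinearMap_apply, ← map_cubicForm,
    ← map_linSubst, cubicCoeffs_map]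

end TernaryCubics

section Elimination

variable {R : Type*} [CommRing R]

/-- The nine products of a variable with a partial derivative of `f`, together with the Hessian.
If `f` is a cubic form, these ten forms are cubic, and they all vanish at a singular point of
`f`. -/
noncomputable def jacobianForms (f : MvPolynomial (Fin 3) R) :
    Option (Fin 3 × Fin 3) → MvPolynomial (Fin 3) R
  | none => hessian f
  | some p => X p.2 * pderiv p.1 f

theorem isHomogeneous_jacobianForms {f : MvPolynomial (Fin 3) R} (hf : f.IsHomogeneous 3)
    (r : Option (Fin 3 × Fin 3)) : (jacobianForms f r).IsHomogeneous 3 := by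
  cases r with
  | none => exact isHomogeneous_hessian hf
  | some p => exact (isHomogeneous_X R p.2).mul hf.pderiv

theorem map_jacobianForms {S : Type*} [CommRing S] (φ : R →+* S) (f : MvPolynomial (Fin 3) R)
    (r : Option (Fin 3 × Fin 3)) :
    map φ (jacobianForms f r) = jacobianForms (map φ f) r := by
  cases r with
  | none => exact map_hessian φ f
  | some p => simp [jacobianForms, pderiv_map]

theorem sum_smul_jacobianForms (f : MvPolynomial (Fin 3) R)
    (c : Option (Fin 3 × Fin 3) → R) :
    ∑ r, c r • jacobianForms f r =
      linDeriv (Matrix.of fun i j ↦ c (some (i, j))) f + c none • hessian f := by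
  rw [Fintype.sum_option, add_comm, linDeriv_eq_sum, Fintype.sum_prod_type]
  refine congrArg (· + _) (Finset.sum_congr rfl fun i _ ↦ ?_)
  rw [Matrix.toMvPolynomial, Finset.mul_sum]
  refine Finset.sum_congr rfl fun j _ ↦ ?_
  rw [← C_mul_X_eq_monomial, smul_eq_C_mul, jacobianForms, Matrix.of_apply]
  ring

theorem Dset.nonempty_equiv_option : Nonempty (Dset ≃ Option (Fin 3 × Fin 3)) :=
  Finite.card_eq.1 (by rw [Dset.card_eq_ten]; simp)

/-- The square matrix whose rows are the coefficient vectors of the ten forms `jacobianForms f`. -/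
noncomputable def eliminationMatrix (f : MvPolynomial (Fin 3) R) : Matrix Dset Dset R :=
  Matrix.of fun d ↦ cubicCoeffs (jacobianForms f (Dset.nonempty_equiv_option.some d))

theorem map_eliminationMatrix {S : Type*} [CommRing S] (φ : R →+* S)
    (f : MvPolynomial (Fin 3) R) :
    (eliminationMatrix f).map φ = eliminationMatrix (map φ f) := by
  ext d e
  simp [eliminationMatrix, ← map_jacobianForms, cubicCoeffs_map]

theorem eliminationMatrix_mulVec {f : MvPolynomial (Fin 3) R} (hf : f.IsHomogeneous 3)
    (v : Fin 3 → R) (d : Dset) :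
    (eliminationMatrix f).mulVec (fun e ↦ ∏ i, v i ^ e.1 i) d =
      eval v (jacobianForms f (Dset.nonempty_equiv_option.some d)) := by
  rw [← cubicForm_cubicCoeffs (isHomogeneous_jacobianForms hf _), eval_cubicForm]
  rfl

theorem vecMul_eliminationMatrix (f : MvPolynomial (Fin 3) R)
    (c : Option (Fin 3 × Fin 3) → R) :
    (eliminationMatrix f).vecMul (c ∘ Dset.nonempty_equiv_option.some) =
      cubicCoeffs (∑ r, c r • jacobianForms f r) := by
  rw [← Dset.nonempty_equiv_option.some.sum_comp, map_sum]
  ext d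
  simp [Matrix.vecMul, dotProduct, eliminationMatrix]

theorem Dset.prod_pow_ne_zero [IsDomain R] {v : Fin 3 → R} (hv : v ≠ 0) :
    (fun d : Dset ↦ ∏ i, v i ^ d.1 i) ≠ 0 := by
  obtain ⟨i, hi⟩ := Function.ne_iff.1 hv
  intro h
  have hsum : (Pi.single i 3 : Fin 3 → ℕ) 0 + (Pi.single i 3 : Fin 3 → ℕ) 1 +
      (Pi.single i 3 : Fin 3 → ℕ) 2 = 3 := by
    rw [← Fin.sum_univ_three, Finset.sum_pi_single']
    simp
  have hprod : ∏ j, v j ^ (Pi.single i 3 : Fin 3 → ℕ) j = 0 := congrFun h ⟨Pi.single i 3, hsum⟩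
  exact hi (by simpa [Pi.single_apply] using hprod)

variable {K : Type*} [Field K]

theorem not_isSingular_sum_X_pow [CharZero K] {σ : Type*} [Fintype σ] {n : ℕ} (hn : 2 ≤ n) :
    ¬ IsSingular (∑ i, X i ^ n : MvPolynomial σ K) := by
  classical
  rintro ⟨v, hv, h⟩
  refine hv (funext fun j ↦ ?_)
  have hj : n * v j ^ (n - 1) = 0 := by simpa [pderiv_X, Pi.single_apply] using h j
  exact eq_zero_of_pow_eq_zero ((mul_eq_zero.1 hj).resolve_left (by norm_cast; lia))

variable [IsAlgClosed K] [CharZero K]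

theorem isSingular_of_det_eliminationMatrix_eq_zero [DecidableEq Dset] {f : MvPolynomial (Fin 3) K}
    (hf : f.IsHomogeneous 3) (hdet : (eliminationMatrix f).det = 0) : IsSingular f := by
  by_contra hs
  obtain ⟨b, hb, hker⟩ := Matrix.exists_vecMul_eq_zero_iff.2 hdet
  set c := b ∘ Dset.nonempty_equiv_option.some.symm
  have hbc : c ∘ Dset.nonempty_equiv_option.some = b := by ext d; simp [c]
  rw [← hbc, vecMul_eliminationMatrix] at hker
  have hsum : (∑ r, c r • jacobianForms f r).IsHomogeneous 3 :=
    IsHomogeneous.sum _ _ _ fun r _ ↦ by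
      rw [smul_eq_C_mul]
      exact (isHomogeneous_jacobianForms hf r).C_mul _
  have hzero := cubicForm_cubicCoeffs hsum
  rw [hker, map_zero, sum_smul_jacobianForms] at hzero
  obtain ⟨hL, hβ⟩ := eq_zero_of_linDeriv_add_smul_hessian hf hs hzero.symm
  have hc : c = 0 := by
    ext (_ | ⟨i, j⟩)
    · exact hβ
    · exact congrFun₂ hL i j
  exact hb (by rw [← hbc, hc]; rfl)

theorem det_eliminationMatrix_eq_zero_iff [DecidableEq Dset]
    {f : MvPolynomial (Fin 3) K} (hf : f.IsHomogeneous 3) :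
    (eliminationMatrix f).det = 0 ↔ IsSingular f := by
  refine ⟨isSingular_of_det_eliminationMatrix_eq_zero hf, fun ⟨v, hv, h⟩ ↦ ?_⟩
  refine Matrix.exists_mulVec_eq_zero_iff.1 ⟨_, Dset.prod_pow_ne_zero hv, funext fun d ↦ ?_⟩
  rw [eliminationMatrix_mulVec hf]
  cases Dset.nonempty_equiv_option.some d with
  | none => exact eval_hessian_eq_zero_of_singular hf hv h
  | some p => simp [jacobianForms, h]

theorem exists_cubic_eliminant :
    ∃ P : MvPolynomial Dset K, P ≠ 0 ∧ ∀ a, eval a P = 0 ↔ IsSingular (cubicForm a) := by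
  classical
  let P : MvPolynomial Dset K := (eliminationMatrix (cubicForm X)).det
  have hP (a : Dset → K) : eval a P = 0 ↔ IsSingular (cubicForm a) := by
    rw [← det_eliminationMatrix_eq_zero_iff (isHomogeneous_cubicForm a), RingHom.map_det,
      RingHom.mapMatrix_apply, map_eliminationMatrix, map_cubicForm]
    simp [Function.comp_def]
  refine ⟨P, fun h ↦ ?_, hP⟩
  have hfermat : (∑ i, X i ^ 3 : MvPolynomial (Fin 3) K).IsHomogeneous 3 :=
    IsHomogeneous.sum _ _ _ fun i _ ↦ isHomogeneous_X_pow i 3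
  apply not_isSingular_sum_X_pow (K := K) (σ := Fin 3) (n := 3) (by simp)
  rw [← cubicForm_cubicCoeffs hfermat, ← hP, h, map_zero]

end Elimination

section Parametrization

variable {K σ τ : Type*} [Field K] [Infinite K]

theorem exists_irreducible_of_zeros_eq_range {P : MvPolynomial σ K} (hP : P ≠ 0)
    (φ : σ → MvPolynomial τ K)
    (h : ∀ a, eval a P = 0 ↔ ∃ t, a = fun s ↦ eval t (φ s)) :
    ∃ Δ : MvPolynomial σ K, Irreducible Δ ∧ ∀ a, eval a Δ = 0 ↔ eval a P = 0 := by
  have eval_bind (t : τ → K) (Q : MvPolynomial σ K) :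
      eval t (bind₁ φ Q) = eval (fun s ↦ eval t (φ s)) Q := by
    rw [← aeval_eq_eval, aeval_bind₁]
    rfl
  obtain ⟨s, hirr, hassoc⟩ := WfDvdMonoid.exists_factors P hP
  have hprod : (s.map (bind₁ φ)).prod = 0 := by
    rw [← map_multiset_prod]
    obtain ⟨Q, hQ⟩ := hassoc.symm.dvd
    refine MvPolynomial.funext fun t ↦ ?_
    rw [hQ, map_mul, map_mul, eval_bind, (h _).2 ⟨t, rfl⟩, zero_mul, map_zero]
  obtain ⟨Δ, hΔs, hΔ⟩ := Multiset.mem_map.1 (Multiset.prod_eq_zero_iff.1 hprod)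
  refine ⟨Δ, hirr Δ hΔs, fun a ↦ ⟨fun ha ↦ ?_, fun ha ↦ ?_⟩⟩
  · exact zero_dvd_iff.1 (ha ▸ map_dvd (eval a) ((Multiset.dvd_prod hΔs).trans hassoc.dvd))
  · obtain ⟨t, rfl⟩ := (h a).1 ha
    rw [← eval_bind, hΔ, map_zero]

end Parametrization

section SingularCubics

theorem exists_isUnit_det_mulVec_eq {K ι : Type*} [Field K] [Fintype ι] [DecidableEq ι]
    {v w : ι → K} (hv : v ≠ 0) (hw : w ≠ 0) :
    ∃ M : Matrix ι ι K, IsUnit M.det ∧ M.mulVec v = w := by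
  obtain ⟨g, hg⟩ := Submodule.exists_linearEquiv_restrict_eq
    ((LinearEquiv.toSpanNonzeroSingleton K (ι → K) v hv).symm ≪≫ₗ
      LinearEquiv.toSpanNonzeroSingleton K (ι → K) w hw)
  refine ⟨g.toLinearMap.toMatrix', ?_, ?_⟩
  · rw [LinearMap.det_toMatrix']
    exact g.isUnit_det'
  · rw [LinearMap.toMatrix'_mulVec]
    have hgv := hg (LinearEquiv.toSpanNonzeroSingleton K (ι → K) v hv 1)
    rw [LinearEquiv.trans_apply, LinearEquiv.symm_apply_apply] at hgv
    simpa using hgv.symm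

theorem exists_range_mulVecLin_eq {K ι : Type*} [Field K] [Fintype ι]
    (W : Submodule K (ι → K)) : ∃ P : Matrix ι ι K, LinearMap.range P.mulVecLin = W := by
  classical
  obtain ⟨p, hp⟩ := W.exists_isCompl
  refine ⟨(W.projection p hp).toMatrix', ?_⟩
  rw [← Matrix.toLin'_apply', Matrix.toLin'_toMatrix', Submodule.range_projection]

variable {R : Type*} [CommRing R]

/-- The space of coefficient vectors of the ternary cubic forms whose gradient vanishes at `v`. -/
noncomputable def cubicsSingularAt (v : Fin 3 → R) : Submodule R (Dset → R) :=
  ⨅ i, LinearMap.ker ((aeval v).toLinearMap ∘ₗ (pderiv i).toLinearMap ∘ₗ cubicForm)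

theorem mem_cubicsSingularAt {v : Fin 3 → R} {a : Dset → R} :
    a ∈ cubicsSingularAt v ↔ ∀ i, eval v (pderiv i (cubicForm a)) = 0 := by
  simp [cubicsSingularAt, aeval_eq_eval]

variable {K : Type*} [Field K]

theorem isSingular_cubicForm_iff {v : Fin 3 → K} (hv : v ≠ 0) (a : Dset → K) :
    IsSingular (cubicForm a) ↔ ∃ M, ∃ b ∈ cubicsSingularAt v, a = cubicSubst M b := by
  constructor
  · rintro ⟨w, hw, h⟩
    obtain ⟨M, hM, hMv⟩ := exists_isUnit_det_mulVec_eq hv hw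
    refine ⟨M⁻¹, cubicSubst M a, mem_cubicsSingularAt.2 fun i ↦ ?_, ?_⟩
    · simp [cubicForm_cubicSubst, eval_pderiv_linSubst, hMv, h]
    · rw [← LinearMap.comp_apply, ← cubicSubst_mul, Matrix.mul_nonsing_inv M hM, cubicSubst_one,
        LinearMap.id_apply]
  · rintro ⟨M, b, hb, rfl⟩
    rw [cubicForm_cubicSubst]
    exact isSingular_linSubst (isHomogeneous_cubicForm b) (by simp)
      ⟨v, hv, mem_cubicsSingularAt.1 hb⟩ M

theorem exists_parametrization_isSingular :
    ∃ φ : Dset → MvPolynomial ((Fin 3 × Fin 3) ⊕ Dset) K,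
      ∀ a, IsSingular (cubicForm a) ↔ ∃ t, a = fun d ↦ eval t (φ d) := by
  obtain ⟨P, hP⟩ := exists_range_mulVecLin_eq (cubicsSingularAt (1 : Fin 3 → K))
  let N : Matrix (Fin 3) (Fin 3) (MvPolynomial ((Fin 3 × Fin 3) ⊕ Dset) K) :=
    .of fun i j ↦ X (.inl (i, j))
  let b : Dset → MvPolynomial ((Fin 3 × Fin 3) ⊕ Dset) K := fun d ↦ X (.inr d)
  have heval (t : (Fin 3 × Fin 3) ⊕ Dset → K) :
      eval t ∘ cubicSubst N ((P.map C).mulVec b) =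
        cubicSubst (.of fun i j ↦ t (.inl (i, j))) (P.mulVec (t ∘ .inr)) := by
    have hN : N.map (eval t) = .of fun i j ↦ t (.inl (i, j)) := by ext; simp [N]
    have hb : eval t ∘ (P.map C).mulVec b = P.mulVec (t ∘ .inr) := by
      ext d
      simp [b, Matrix.mulVec, dotProduct]
    rw [map_comp_cubicSubst, hN, hb]
  refine ⟨cubicSubst N ((P.map C).mulVec b), fun a ↦ ?_⟩
  rw [isSingular_cubicForm_iff one_ne_zero, ← hP]
  constructor
  · rintro ⟨M, _, ⟨c, rfl⟩, rfl⟩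
    exact ⟨_, (heval (Sum.elim (fun p ↦ M p.1 p.2) c)).symm⟩
  · rintro ⟨t, rfl⟩
    exact ⟨.of fun i j ↦ t (.inl (i, j)), P.mulVec (t ∘ .inr), ⟨_, rfl⟩, heval t⟩

end SingularCubics

section SemiInvariants

variable {K σ : Type*} [Field K]

theorem dvd_of_forall_eval_eq_zero [IsAlgClosed K] [Finite σ] {P Q : MvPolynomial σ K}
    (hP : Irreducible P) (h : ∀ a, eval a P = 0 → eval a Q = 0) : P ∣ Q := by
  have := (Ideal.span_singleton_prime hP.ne_zero).2 hP.prime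
  rw [← Ideal.mem_span_singleton, ← IsPrime.vanishingIdeal_zeroLocus (K := K) (Ideal.span {P})]
  exact fun a ha ↦ h a (ha P (Ideal.mem_span_singleton_self P))

theorem exists_forall_eval_eq_mul [IsAlgClosed K] [Finite σ] {P : MvPolynomial σ K}
    (hP : Irreducible P) (e : (σ → K) ≃ₗ[K] (σ → K))
    (he : ∀ a, eval (e a) P = 0 ↔ eval a P = 0) :
    ∃ c : K, ∀ a, eval (e a) P = c * eval a P := by
  classical
  have := Fintype.ofFinite σ
  have eval_subst (e : (σ → K) ≃ₗ[K] (σ → K)) (Q : MvPolynomial σ K) (a : σ → K) :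
      eval a (linSubst e.toLinearMap.toMatrix' Q) = eval (e a) Q := by
    rw [eval_linSubst, LinearMap.toMatrix'_mulVec]
    rfl
  have hdvd : P ∣ linSubst e.toLinearMap.toMatrix' P :=
    dvd_of_forall_eval_eq_zero hP fun a ha ↦ by rwa [eval_subst, he]
  have hdvd_symm : P ∣ linSubst e.symm.toLinearMap.toMatrix' P :=
    dvd_of_forall_eval_eq_zero hP fun a ha ↦ by
      rwa [eval_subst, ← he, e.apply_symm_apply]
  have hdvd' : linSubst e.toLinearMap.toMatrix' P ∣ P := by
    convert map_dvd (linSubst e.toLinearMap.toMatrix') hdvd_symm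
    refine MvPolynomial.funext fun a ↦ ?_
    rw [eval_subst, eval_subst, e.symm_apply_apply]
  obtain ⟨u, hu⟩ := associated_of_dvd_dvd hdvd hdvd'
  obtain ⟨c, -, hc⟩ := isUnit_iff_eq_C_of_isReduced.1 u.isUnit
  refine ⟨c, fun a ↦ ?_⟩
  rw [← eval_subst, ← hu, hc, map_mul, eval_C, mul_comm]

theorem coeff_aeval_C_mul_X {R : Type*} [CommRing R] (t : R) (P : MvPolynomial σ R)
    (m : σ →₀ ℕ) :
    coeff m (aeval (fun i ↦ C t * X i : σ → MvPolynomial σ R) P) = t ^ m.degree * coeff m P := by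
  classical
  induction P using MvPolynomial.induction_on' with
  | add p q hp hq => rw [map_add, coeff_add, hp, hq, coeff_add, mul_add]
  | monomial u r =>
    have hu : aeval (fun i ↦ C t * X i : σ → MvPolynomial σ R) (monomial u r) =
        monomial u (t ^ u.degree * r) := by
      rw [aeval_monomial, monomial_eq, algebraMap_eq]
      simp only [mul_pow, Finsupp.prod_mul]
      rw [Finsupp.prod, Finset.prod_pow_eq_pow_sum, ← Finsupp.degree_apply, ← map_pow, C_mul]
      ring
    rw [hu, coeff_monomial, coeff_monomial]
    split_ifs with h
    · rw [h]
    · rw [mul_zero]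

theorem exists_isHomogeneous_of_eval_smul {R : Type*} [CommRing R] [IsDomain R] {t : R}
    (ht : Function.Injective fun n : ℕ ↦ t ^ n) {P : MvPolynomial σ R} {c : R}
    (h : ∀ a, eval (t • a) P = c * eval a P) : ∃ n, P.IsHomogeneous n := by
  have := Infinite.of_injective _ ht
  have hsubst : aeval (fun i ↦ C t * X i : σ → MvPolynomial σ R) P = C c * P := by
    refine MvPolynomial.funext fun a ↦ ?_
    rw [map_mul, eval_C, ← h, ← aeval_eq_eval, comp_aeval_apply, ← aeval_eq_eval]
    congr 2
    ext i
    simp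
  have hpow (m : σ →₀ ℕ) (hm : coeff m P ≠ 0) : t ^ m.degree = c := by
    have hcoeff := coeff_aeval_C_mul_X t P m
    rw [hsubst, coeff_C_mul] at hcoeff
    exact (mul_right_cancel₀ hm hcoeff).symm
  obtain rfl | hP := eq_or_ne P 0
  · exact ⟨0, isHomogeneous_zero _ _ _⟩
  obtain ⟨m, hm⟩ := exists_coeff_ne_zero hP
  refine ⟨m.degree, fun d hd ↦ ?_⟩
  exact (DFunLike.congr_fun Finsupp.degree_eq_weight_one d).symm.trans
    (ht ((hpow d hd).trans (hpow m hm).symm))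

theorem degree_pos_of_irreducible_of_isHomogeneous {P : MvPolynomial σ K} {n : ℕ}
    (hP : Irreducible P) (h : P.IsHomogeneous n) : 0 < n := by
  rw [← h.totalDegree hP.ne_zero]
  refine Nat.pos_of_ne_zero fun hdeg ↦
    hP.not_isUnit (isUnit_iff_totalDegree_of_isReduced.2 ⟨?_, hdeg⟩)
  rw [totalDegree_eq_zero_iff_eq_C] at hdeg
  exact isUnit_iff_ne_zero.2 fun h0 ↦ hP.ne_zero (by rw [hdeg, h0, map_zero])

theorem exists_monoidHom_of_semiinvariant {G V K : Type*} [Group G] [Field K]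
    (act : G → V → V) (hone : act 1 = id) (hmul : ∀ g h, act (g * h) = act h ∘ act g)
    (F : V → K) (hF : F ≠ 0) (h : ∀ g, ∃ c, ∀ x, F (act g x) = c * F x) :
    ∃ χ : G →* K, ∀ g x, F (act g x) = χ g * F x := by
  obtain ⟨x, hx⟩ := Function.ne_iff.1 hF
  choose χ hχ using h
  refine ⟨⟨⟨χ, mul_right_cancel₀ hx ?_⟩, fun g h ↦ mul_right_cancel₀ hx ?_⟩, hχ⟩
  · rw [← hχ, hone, id_eq, one_mul]
  · rw [← hχ, hmul, Function.comp_apply, hχ, hχ]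
    ring

end SemiInvariants

section SpecialLinearGroup

open Matrix Matrix.SpecialLinearGroup commutatorElement

variable {F ι : Type*} [Field F] [Fintype ι] [DecidableEq ι]

theorem commutatorElement_diag2n_transvection {i j : ι} (hij : i ≠ j) {a : F} (ha : a ≠ 0) (b : F) :
    ⁅diag2n hij a ha, transvection hij b⁆ = transvection hij ((a ^ 2 - 1) * b) := by
  rw [commutatorElement_def, mul_inv_eq_iff_eq_mul, mul_inv_eq_iff_eq_mul, ← transvection_add]
  refine Subtype.ext ?_
  rw [Matrix.SpecialLinearGroup.coe_mul, Matrix.SpecialLinearGroup.coe_mul, transvection_coe,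
    transvection_coe, diag2n_coe, mul_add, add_mul, mul_one, one_mul]
  congr 1
  ext k l
  simp only [diagonal_mul, mul_diagonal, single_apply]
  grind

theorem transvection_mem_commutator_specialLinearGroup {i j : ι} (hij : i ≠ j) {a : F}
    (ha : a ≠ 0) (ha2 : a ^ 2 ≠ 1) (b : F) :
    transvection hij b ∈ commutator (SpecialLinearGroup ι F) := by
  rw [← mul_div_cancel₀ b (sub_ne_zero.2 ha2), ← commutatorElement_diag2n_transvection hij ha]
  exact Subgroup.commutator_mem_commutator (Subgroup.mem_top _) (Subgroup.mem_top _)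

theorem diag2n_eq_prod_transvection {i j : ι} (hij : i ≠ j) {a : F} (ha : a ≠ 0) :
    diag2n hij a ha = transvection hij a * transvection hij.symm (-a⁻¹) * transvection hij a *
      transvection hij (-1) * transvection hij.symm 1 * transvection hij (-1) := by
  refine Matrix.SpecialLinearGroup.ext _ _ fun k l ↦ ?_
  simp only [Matrix.SpecialLinearGroup.coe_mul, transvection_coe, diag2n_coe, mul_add, add_mul,
    mul_one, one_mul, single_mul_single_same, single_mul_single_of_ne _ _ _ _ hij,
    single_mul_single_of_ne _ _ _ _ hij.symm, zero_mul]
  simp only [Matrix.add_apply, Matrix.zero_apply, single_apply, one_apply, diagonal_apply]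
  grind

theorem isPerfect_specialLinearGroup [Nontrivial ι] {a : F} (ha : a ≠ 0) (ha2 : a ^ 2 ≠ 1) :
    Group.IsPerfect (SpecialLinearGroup ι F) := by
  refine ⟨eq_top_iff.2 fun g _ ↦ diagonal_transvection_induction' _ g (fun i j hij c hc ↦ ?_)
    (fun i j hij ↦ transvection_mem_commutator_specialLinearGroup hij ha ha2) fun _ _ ↦ mul_mem⟩
  rw [diag2n_eq_prod_transvection]
  have h {i j : ι} (hij : i ≠ j) (b : F) :=
    transvection_mem_commutator_specialLinearGroup hij ha ha2 b
  exact mul_mem (mul_mem (mul_mem (mul_mem (mul_mem (h _ _) (h _ _)) (h _ _)) (h _ _)) (h _ _))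
    (h _ _)

theorem monoidHom_eq_one_of_isPerfect {G M : Type*} [Group G] [CommMonoid M] [Group.IsPerfect G]
    (χ : G →* M) : χ = 1 := by
  ext g
  have hg := Abelianization.commutator_subset_ker χ.toHomUnits
    (Group.IsPerfect.mem_commutator (g := g))
  exact congrArg Units.val (MonoidHom.mem_ker.1 hg)

end SpecialLinearGroup

section Discriminant

/-- The action of `SL₃` on the coefficient vectors of ternary cubic forms. -/
noncomputable def cubicSubstEquiv {R : Type*} [CommRing R]
    (g : Matrix.SpecialLinearGroup (Fin 3) R) :
    (Dset → R) ≃ₗ[R] (Dset → R) :=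
  .ofLinearMap (cubicSubst g.1) (cubicSubst g⁻¹.1)
    (by rw [← cubicSubst_mul, ← Matrix.SpecialLinearGroup.coe_mul, inv_mul_cancel,
      Matrix.SpecialLinearGroup.coe_one, cubicSubst_one])
    (by rw [← cubicSubst_mul, ← Matrix.SpecialLinearGroup.coe_mul, mul_inv_cancel,
      Matrix.SpecialLinearGroup.coe_one, cubicSubst_one])

variable {K : Type*} [Field K] [IsAlgClosed K] [CharZero K]

theorem exists_irreducible_eval_eq_zero_iff_isSingular :
    ∃ Δ : MvPolynomial Dset K, Irreducible Δ ∧ ∀ a, eval a Δ = 0 ↔ IsSingular (cubicForm a) := by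
  obtain ⟨P, hP, hP0⟩ := exists_cubic_eliminant (K := K)
  obtain ⟨φ, hφ⟩ := exists_parametrization_isSingular (K := K)
  obtain ⟨Δ, hΔ, hΔP⟩ := exists_irreducible_of_zeros_eq_range hP φ fun a ↦ (hP0 a).trans (hφ a)
  exact ⟨Δ, hΔ, fun a ↦ (hΔP a).trans (hP0 a)⟩

theorem exists_isHomogeneous_of_zeros_eq_singular {Δ : MvPolynomial Dset K} (hΔ : Irreducible Δ)
    (h : ∀ a, eval a Δ = 0 ↔ IsSingular (cubicForm a)) : ∃ n, 0 < n ∧ Δ.IsHomogeneous n := by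
  obtain ⟨c, hc⟩ := exists_forall_eval_eq_mul hΔ
    (LinearEquiv.smulOfNeZero K (Dset → K) 2 two_ne_zero) fun a ↦ by
      rw [h, h, LinearEquiv.smulOfNeZero_apply, map_smul, isSingular_smul_iff two_ne_zero]
  obtain ⟨n, hn⟩ := exists_isHomogeneous_of_eval_smul (t := (2 : K)) (fun m n hmn ↦
    Nat.pow_right_injective le_rfl (Nat.cast_injective (R := K) (by simpa using hmn))) hc
  exact ⟨n, degree_pos_of_irreducible_of_isHomogeneous hΔ hn, hn⟩

theorem eval_cubicSubst_of_zeros_eq_singular {Δ : MvPolynomial Dset K} (hΔ : Irreducible Δ)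
    (h : ∀ a, eval a Δ = 0 ↔ IsSingular (cubicForm a)) (g : Matrix.SpecialLinearGroup (Fin 3) K)
    (a : Dset → K) : eval (cubicSubst g.1 a) Δ = eval a Δ := by
  have hsemi (g : Matrix.SpecialLinearGroup (Fin 3) K) :
      ∃ c, ∀ a, eval (cubicSubst g.1 a) Δ = c * eval a Δ :=
    exists_forall_eval_eq_mul hΔ (cubicSubstEquiv g) fun a ↦ by
      have hg : IsUnit g.1.det := by simp
      rw [h, h]
      change IsSingular (cubicForm (cubicSubst g.1 a)) ↔ _
      rw [cubicForm_cubicSubst]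
      exact ⟨isSingular_of_isSingular_linSubst hg, isSingular_linSubst_of_isUnit hg⟩
  obtain ⟨χ, hχ⟩ := exists_monoidHom_of_semiinvariant
    (fun (g : Matrix.SpecialLinearGroup (Fin 3) K) a ↦ cubicSubst g.1 a)
    (by simp only [Matrix.SpecialLinearGroup.coe_one, cubicSubst_one]; rfl)
    (fun g h ↦ by simp only [Matrix.SpecialLinearGroup.coe_mul, cubicSubst_mul]; rfl)
    (fun a ↦ eval a Δ) (fun h0 ↦ hΔ.ne_zero (MvPolynomial.funext (congrFun h0))) hsemi
  have := isPerfect_specialLinearGroup (ι := Fin 3) (two_ne_zero (α := K)) (by norm_num)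
  rw [hχ, monoidHom_eq_one_of_isPerfect χ, MonoidHom.one_apply, one_mul]

theorem exists_discriminant_general (K : Type*) [Field K] [IsAlgClosed K] [CharZero K] :
    ∃ Δ : MvPolynomial Dset K,
      Irreducible Δ ∧
      (∃ n : ℕ, 0 < n ∧ Δ.IsHomogeneous n) ∧
      (∀ (g : Matrix.SpecialLinearGroup (Fin 3) K) (a : Dset → K),
        eval (cubicCoeffs (linSubst g.1 (cubicForm a))) Δ = eval a Δ) ∧
      (∀ a : Dset → K, eval a Δ = 0 ↔ IsSingular (cubicForm a)) := by
  obtain ⟨Δ, hΔ, h⟩ := exists_irreducible_eval_eq_zero_iff_isSingular (K := K)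
  exact ⟨Δ, hΔ, exists_isHomogeneous_of_zeros_eq_singular hΔ h,
    eval_cubicSubst_of_zeros_eq_singular hΔ h, h⟩

end Discriminant

theorem cubic_eq_cubicForm (a : Dset → ℂ) : cubic a = cubicForm a := by
  rw [cubic, cubicForm_apply]
  refine Finset.sum_congr rfl fun d _ ↦ ?_
  simp [monomial_eq, Finsupp.prod_fintype, Fin.prod_univ_three, Dset.exponent, mul_assoc]

theorem coeffVec_eq_cubicCoeffs (f : MvPolynomial (Fin 3) ℂ) : coeffVec f = cubicCoeffs f :=
  rfl

theorem substSL_eq_linSubst (g : Matrix.SpecialLinearGroup (Fin 3) ℂ)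
    (f : MvPolynomial (Fin 3) ℂ) : substSL g f = linSubst g.1 f := by
  rw [substSL, linSubst, bind₁]
  congr 2 with i
  simp [Matrix.toMvPolynomial, ← C_mul_X_eq_monomial]

theorem isSmoothCubic_iff_not_isSingular {f : MvPolynomial (Fin 3) ℂ} (hf : f.IsHomogeneous 3) :
    IsSmoothCubic f ↔ ¬ IsSingular f := by
  simp only [IsSmoothCubic, IsSingular, not_exists, not_and, not_forall]
  refine forall₂_congr fun v _ ↦ ⟨fun h ↦ ?_, fun h _ ↦ h⟩
  by_contra! hgrad
  have hEuler := sum_mul_eval_pderiv hf v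
  simp only [hgrad, mul_zero, Finset.sum_const_zero, zero_eq_mul, Nat.cast_ofNat,
    OfNat.ofNat_ne_zero, false_or] at hEuler
  obtain ⟨i, hi⟩ := h hEuler
  exact hi (hgrad i)

/-- There is an irreducible homogeneous `SL₃`-invariant polynomial `Δ` in the 10
coefficients of a plane cubic whose nonvanishing at `a` is equivalent to smoothness of the
cubic `f_a` (i.e. to `C(f_a)` being an elliptic curve). -/
theorem exists_discriminant :
    ∃ Δ : MvPolynomial Dset ℂ,
      Irreducible Δ ∧
      (∃ n : ℕ, 0 < n ∧ Δ.IsHomogeneous n) ∧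
      (∀ (g : Matrix.SpecialLinearGroup (Fin 3) ℂ) (a : Dset → ℂ),
        eval (coeffVec (substSL g (cubic a))) Δ = eval a Δ) ∧
      (∀ a : Dset → ℂ, eval a Δ ≠ 0 ↔ IsSmoothCubic (cubic a)) := by
  obtain ⟨Δ, hΔ, hhom, hinv, hsing⟩ := exists_discriminant_general ℂ
  refine ⟨Δ, hΔ, hhom, fun g a ↦ ?_, fun a ↦ ?_⟩
  · rw [cubic_eq_cubicForm, coeffVec_eq_cubicCoeffs, substSL_eq_linSubst, hinv]
  · rw [cubic_eq_cubicForm, isSmoothCubic_iff_not_isSingular (isHomogeneous_cubicForm a), ne_eq,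
      hsing]
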